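/- arXiv:2306.07018 — 3 statements merged into one kernel-verified Lean document; each statement's English description precedes it below -/
import Mathlib

section
/- (Homogeneous treatment effects for movers, case D = D1) Under the IV assumptions (Independence, Relevance, Monotonicity, Exclusion), if additionally E[Y(1,1)−Y(0,0); {C1,N2}] = E[Y(1,0)−Y(0,0); {C1,N2}], E[Y(1,1)−Y(0,0); {C1,A2}] = E[Y(1,1)−Y(0,1); {C1,A2}], E[Y(1,1)−Y(0,0); {N1,C2}] = E[Y(1,1)−Y(0,1); {N1,C2}], and E[Y(1,1)−Y(0,0); {A1,C2}] = E[Y(1,0)−Y(0,0); {A1,C2}], then the IV estimand with treatment D1 identifies the full treatment effect for three complier groups: ΔE[Y|Z]/ΔE[D1|Z] = E[Y(1,1)−Y(0,0) | {C1,C2} ∪ {C1,N2} ∪ {C1,A2}] (the conditioning event has positive probability equal to ΔE[D1|Z]). (Corollary 2, first row of Table A) -/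
open MeasureTheory ProbabilityTheory

noncomputable section

variable {Ω : Type*} [MeasurableSpace Ω]

/-- Observed first-part treatment: `D1 = D1(1)·Z + D1(0)·(1−Z)`. -/
def obsD1 (Z : Ω → ℝ) (D1 : Bool → Ω → ℝ) (ω : Ω) : ℝ :=
  D1 true ω * Z ω + D1 false ω * (1 - Z ω)

/-- Observed second-part treatment. -/
def obsD2 (Z : Ω → ℝ) (D1 : Bool → Ω → ℝ) (D2 : Bool → Bool → Ω → ℝ) (ω : Ω) : ℝ :=
  (D2 true true ω * obsD1 Z D1 ω + D2 true false ω * (1 - obsD1 Z D1 ω)) * Z ω +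
  (D2 false true ω * obsD1 Z D1 ω + D2 false false ω * (1 - obsD1 Z D1 ω)) * (1 - Z ω)

/-- Summary treatment `D∧ = D1·D2`. -/
def obsDand (Z : Ω → ℝ) (D1 : Bool → Ω → ℝ) (D2 : Bool → Bool → Ω → ℝ) (ω : Ω) : ℝ :=
  obsD1 Z D1 ω * obsD2 Z D1 D2 ω

/-- Summary treatment `D∨ = D1 + D2 − D1·D2`. -/
def obsDor (Z : Ω → ℝ) (D1 : Bool → Ω → ℝ) (D2 : Bool → Bool → Ω → ℝ) (ω : Ω) : ℝ :=
  obsD1 Z D1 ω + obsD2 Z D1 D2 ω - obsD1 Z D1 ω * obsD2 Z D1 D2 ω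

/-- Observed outcome `Y = Σ_{d1,d2} Y(Z,d1,d2)·1{D1=d1, D2=d2}`, written out using that the
observed treatments and the instrument are {0,1}-valued. The first index of `Yp` is `z`, the
second is `d1`, the third is `d2`. -/
def obsY (Z : Ω → ℝ) (D1 : Bool → Ω → ℝ) (D2 : Bool → Bool → Ω → ℝ)
    (Yp : Bool → Bool → Bool → Ω → ℝ) (ω : Ω) : ℝ :=
  (Yp true true true ω * obsD1 Z D1 ω * obsD2 Z D1 D2 ω +
   Yp true false true ω * (1 - obsD1 Z D1 ω) * obsD2 Z D1 D2 ω +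
   Yp true true false ω * obsD1 Z D1 ω * (1 - obsD2 Z D1 D2 ω) +
   Yp true false false ω * (1 - obsD1 Z D1 ω) * (1 - obsD2 Z D1 D2 ω)) * Z ω +
  (Yp false true true ω * obsD1 Z D1 ω * obsD2 Z D1 D2 ω +
   Yp false false true ω * (1 - obsD1 Z D1 ω) * obsD2 Z D1 D2 ω +
   Yp false true false ω * obsD1 Z D1 ω * (1 - obsD2 Z D1 D2 ω) +
   Yp false false false ω * (1 - obsD1 Z D1 ω) * (1 - obsD2 Z D1 D2 ω)) * (1 - Z ω)

/-- `ΔE[A|Z] := E[A | Z = 1] − E[A | Z = 0]`, expectations under conditional measures. -/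
def dE (μ : Measure Ω) (Z A : Ω → ℝ) : ℝ :=
  (∫ ω, A ω ∂(μ[|Z ⁻¹' {1}])) - (∫ ω, A ω ∂(μ[|Z ⁻¹' {0}]))

/-- The full-complier event `{C1,C2}`. -/
def CCev (D1 : Bool → Ω → ℝ) (D2 : Bool → Bool → Ω → ℝ) : Set Ω :=
  {ω | D1 true ω - D1 false ω = 1 ∧ D2 true true ω - D2 false false ω = 1}

/-- The mover event `{C1,N2}`. -/
def CNev (D1 : Bool → Ω → ℝ) (D2 : Bool → Bool → Ω → ℝ) : Set Ω :=
  {ω | D1 true ω - D1 false ω = 1 ∧ D2 true true ω = 0 ∧ D2 false false ω = 0}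

/-- The mover event `{C1,A2}`. -/
def CAev (D1 : Bool → Ω → ℝ) (D2 : Bool → Bool → Ω → ℝ) : Set Ω :=
  {ω | D1 true ω - D1 false ω = 1 ∧ D2 true true ω = 1 ∧ D2 false false ω = 1}

/-- The mover event `{N1,C2}`. -/
def NCev (D1 : Bool → Ω → ℝ) (D2 : Bool → Bool → Ω → ℝ) : Set Ω :=
  {ω | D1 true ω = 0 ∧ D1 false ω = 0 ∧ D2 true false ω - D2 false false ω = 1}

/-- The mover event `{A1,C2}`. -/
def ACev (D1 : Bool → Ω → ℝ) (D2 : Bool → Bool → Ω → ℝ) : Set Ω :=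
  {ω | D1 true ω = 1 ∧ D1 false ω = 1 ∧ D2 true true ω - D2 false true ω = 1}

/-- Conditioning on an independent event does not change the integral. -/
lemma integral_cond_of_indep {α : Type*} [MeasurableSpace α] (μ : Measure Ω)
    [IsProbabilityMeasure μ] (Z : Ω → ℝ) (V : Ω → α) (hZ : Measurable Z) (hV : Measurable V)
    (h : IndepFun V Z μ) (z : ℝ) (hz : μ (Z ⁻¹' {z}) ≠ 0) (F : α → ℝ) (hF : Measurable F)
    (A : Ω → ℝ) (hA : ∀ ω, Z ω = z → A ω = F (V ω)) :
    ∫ ω, A ω ∂(μ[|Z ⁻¹' {z}]) = ∫ ω, F (V ω) ∂μ := by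
  have hs : MeasurableSet (Z ⁻¹' {z}) := hZ (measurableSet_singleton z)
  have h1 : ∫ ω, A ω ∂(μ[|Z ⁻¹' {z}]) = ∫ ω, F (V ω) ∂(μ[|Z ⁻¹' {z}]) := by
    apply integral_congr_ae
    filter_upwards [ae_cond_mem (μ := μ) hs] with ω hω using hA ω hω
  have hmap : (μ[|Z ⁻¹' {z}]).map V = μ.map V := by
    ext B hB
    rw [Measure.map_apply hV hB, Measure.map_apply hV hB, cond_apply hs, Set.inter_comm,
      h.measure_inter_preimage_eq_mul _ _ hB (measurableSet_singleton z), mul_comm, mul_assoc,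
      ENNReal.mul_inv_cancel hz (measure_ne_top _ _), mul_one]
  rw [h1, ← integral_map (f := F) hV.aemeasurable hF.aestronglyMeasurable, hmap,
    integral_map hV.aemeasurable hF.aestronglyMeasurable]

/-- The outcome as a function of the treatment pair. -/
def mixY (y : Bool → Bool → ℝ) (a b : ℝ) : ℝ :=
  y true true * a * b + y false true * (1 - a) * b + y true false * a * (1 - b)
    + y false false * (1 - a) * (1 - b)

lemma integrable_mixY (μ : Measure Ω) (y : Bool → Bool → Ω → ℝ) (a b : Ω → ℝ)
    (hy : ∀ i j, Integrable (y i j) μ) (ha : Measurable a) (hb : Measurable b)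
    (ha01 : ∀ ω, a ω = 0 ∨ a ω = 1) (hb01 : ∀ ω, b ω = 0 ∨ b ω = 1) :
    Integrable (fun ω => mixY (fun i j => y i j ω) (a ω) (b ω)) μ := by
  have key : ∀ (f c : Ω → ℝ), Integrable f μ → Measurable c → (∀ ω, c ω = 0 ∨ c ω = 1) →
      Integrable (fun ω => f ω * c ω) μ := by
    intro f c hf hc h01
    refine hf.mul_bdd (c := 1) hc.aestronglyMeasurable (Filter.Eventually.of_forall fun ω => ?_)
    rcases h01 ω with h | h <;> simp [h]
  have ha' : Measurable (fun ω => 1 - a ω) := measurable_const.sub ha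
  have hb' : Measurable (fun ω => 1 - b ω) := measurable_const.sub hb
  have ha01' : ∀ ω, 1 - a ω = 0 ∨ 1 - a ω = 1 := by
    intro ω; rcases ha01 ω with h | h <;> simp [h]
  have hb01' : ∀ ω, 1 - b ω = 0 ∨ 1 - b ω = 1 := by
    intro ω; rcases hb01 ω with h | h <;> simp [h]
  unfold mixY
  exact (((key _ _ (key _ _ (hy _ _) ha ha01) hb hb01).add
    (key _ _ (key _ _ (hy _ _) ha' ha01') hb hb01)).add
    (key _ _ (key _ _ (hy _ _) ha ha01) hb' hb01')).add
    (key _ _ (key _ _ (hy _ _) ha' ha01') hb' hb01')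

theorem stmt_6
    (μ : Measure Ω) [IsProbabilityMeasure μ]
    (Z : Ω → ℝ) (D1 : Bool → Ω → ℝ) (D2 : Bool → Bool → Ω → ℝ)
    (Yp : Bool → Bool → Bool → Ω → ℝ)
    (hZmeas : Measurable Z)
    (hD1meas : ∀ b, Measurable (D1 b))
    (hD2meas : ∀ b b', Measurable (D2 b b'))
    (hYmeas : ∀ z d1 d2, Measurable (Yp z d1 d2))
    (hYint : ∀ z d1 d2, Integrable (Yp z d1 d2) μ)
    (hZ01 : ∀ ω, Z ω = 0 ∨ Z ω = 1)
    (hZpos : 0 < μ (Z ⁻¹' {1})) (hZlt : μ (Z ⁻¹' {1}) < 1)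
    (hD101 : ∀ b ω, D1 b ω = 0 ∨ D1 b ω = 1)
    (hD201 : ∀ b b' ω, D2 b b' ω = 0 ∨ D2 b b' ω = 1)
    (hindep : IndepFun
      (fun ω => ((fun b => D1 b ω), (fun b b' => D2 b b' ω), (fun z d1 d2 => Yp z d1 d2 ω))) Z μ)
    (hrel1 : 0 < dE μ Z (obsD1 Z D1))
    (hrel2 : 0 < dE μ Z (obsD2 Z D1 D2))
    (hrelAnd : 0 < dE μ Z (obsDand Z D1 D2))
    (hrelOr : 0 < dE μ Z (obsDor Z D1 D2))
    (hmono1 : ∀ᵐ ω ∂μ, D1 false ω ≤ D1 true ω)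
    (hmono2 : ∀ᵐ ω ∂μ,
      D2 false true ω * D1 false ω + D2 false false ω * (1 - D1 false ω) ≤
        D2 true true ω * D1 true ω + D2 true false ω * (1 - D1 true ω))
    (hexcl : ∀ d1 d2, ∀ᵐ ω ∂μ, Yp true d1 d2 ω = Yp false d1 d2 ω)
    (hom1 : ∫ ω in CNev D1 D2, (Yp true true true ω - Yp true false false ω) ∂μ =
      ∫ ω in CNev D1 D2, (Yp true true false ω - Yp true false false ω) ∂μ)
    (hom2 : ∫ ω in CAev D1 D2, (Yp true true true ω - Yp true false false ω) ∂μ =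
      ∫ ω in CAev D1 D2, (Yp true true true ω - Yp true false true ω) ∂μ)
    (hom3 : ∫ ω in NCev D1 D2, (Yp true true true ω - Yp true false false ω) ∂μ =
      ∫ ω in NCev D1 D2, (Yp true true true ω - Yp true false true ω) ∂μ)
    (hom4 : ∫ ω in ACev D1 D2, (Yp true true true ω - Yp true false false ω) ∂μ =
      ∫ ω in ACev D1 D2, (Yp true true false ω - Yp true false false ω) ∂μ) :
    0 < μ (CCev D1 D2 ∪ CNev D1 D2 ∪ CAev D1 D2) ∧
    (μ (CCev D1 D2 ∪ CNev D1 D2 ∪ CAev D1 D2)).toReal = dE μ Z (obsD1 Z D1) ∧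
    dE μ Z (obsY Z D1 D2 Yp) / dE μ Z (obsD1 Z D1) =
      (∫ ω in CCev D1 D2 ∪ CNev D1 D2 ∪ CAev D1 D2, (Yp true true true ω - Yp true false false ω) ∂μ) /
        (μ (CCev D1 D2 ∪ CNev D1 D2 ∪ CAev D1 D2)).toReal := by
  have hZ1 : μ (Z ⁻¹' {1}) ≠ 0 := hZpos.ne'
  have hZ0 : μ (Z ⁻¹' {0}) ≠ 0 := by
    intro h0
    have hU : (Z ⁻¹' {0} : Set Ω) ∪ Z ⁻¹' {1} = Set.univ := by
      ext ω; simpa using hZ01 ω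
    have h2 := measure_union_le (μ := μ) (Z ⁻¹' {0}) (Z ⁻¹' {1})
    rw [hU, h0, zero_add, measure_univ] at h2
    exact absurd hZlt (not_lt.mpr h2)
  have hVmeas : Measurable (fun ω => ((fun b => D1 b ω), (fun b b' => D2 b b' ω),
      (fun z d1 d2 => Yp z d1 d2 ω)) : Ω → (Bool → ℝ) × (Bool → Bool → ℝ) ×
        (Bool → Bool → Bool → ℝ)) := by
    fun_prop
  have h01 : ∀ z : Bool, ∀ ω, D2 z true ω * D1 z ω + D2 z false ω * (1 - D1 z ω) = 0 ∨
      D2 z true ω * D1 z ω + D2 z false ω * (1 - D1 z ω) = 1 := by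
    intro z ω
    rcases hD101 z ω with h | h <;> simp [h, hD201]
  have hd1 : dE μ Z (obsD1 Z D1) = ∫ ω, (D1 true ω - D1 false ω) ∂μ := by
    have hi : ∀ b, Integrable (D1 b) μ := by
      intro b
      refine Integrable.of_bound (hD1meas b).aestronglyMeasurable 1
        (Filter.Eventually.of_forall fun ω => ?_)
      rcases hD101 b ω with h | h <;> simp [h]
    rw [integral_sub (hi _) (hi _)]
    unfold dE
    rw [integral_cond_of_indep μ Z _ hZmeas hVmeas hindep 1 hZ1 (fun v => v.1 true)
        (by fun_prop) (obsD1 Z D1) (by intro ω h; simp [obsD1, h]),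
      integral_cond_of_indep μ Z _ hZmeas hVmeas hindep 0 hZ0 (fun v => v.1 false)
        (by fun_prop) (obsD1 Z D1) (by intro ω h; simp [obsD1, h])]
  have hdY : dE μ Z (obsY Z D1 D2 Yp) = ∫ ω,
      (mixY (fun i j => Yp true i j ω) (D1 true ω)
        (D2 true true ω * D1 true ω + D2 true false ω * (1 - D1 true ω)) -
      mixY (fun i j => Yp false i j ω) (D1 false ω)
        (D2 false true ω * D1 false ω + D2 false false ω * (1 - D1 false ω))) ∂μ := by
    rw [integral_sub (integrable_mixY μ _ _ _ (hYint true) (hD1meas _) (by fun_prop) (hD101 _)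
      (h01 true)) (integrable_mixY μ _ _ _ (hYint false) (hD1meas _) (by fun_prop) (hD101 _)
      (h01 false))]
    unfold dE
    rw [integral_cond_of_indep μ Z _ hZmeas hVmeas hindep 1 hZ1
        (fun v => mixY (fun i j => v.2.2 true i j) (v.1 true)
          (v.2.1 true true * v.1 true + v.2.1 true false * (1 - v.1 true)))
        (by unfold mixY; fun_prop) (obsY Z D1 D2 Yp)
        (by intro ω h; simp [obsY, obsD1, obsD2, mixY, h]),
      integral_cond_of_indep μ Z _ hZmeas hVmeas hindep 0 hZ0
        (fun v => mixY (fun i j => v.2.2 false i j) (v.1 false)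
          (v.2.1 false true * v.1 false + v.2.1 false false * (1 - v.1 false)))
        (by unfold mixY; fun_prop) (obsY Z D1 D2 Yp)
        (by intro ω h; simp [obsY, obsD1, obsD2, mixY, h])]
  have e1 : ∀ (f : Ω → ℝ), Measurable f → ∀ c : ℝ, MeasurableSet {ω | f ω = c} :=
    fun f hf c => hf (measurableSet_singleton c)
  have mCC : MeasurableSet (CCev D1 D2) :=
    (e1 _ ((hD1meas _).sub (hD1meas _)) 1).inter (e1 _ ((hD2meas _ _).sub (hD2meas _ _)) 1)
  have mCN : MeasurableSet (CNev D1 D2) :=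
    (e1 _ ((hD1meas _).sub (hD1meas _)) 1).inter ((e1 _ (hD2meas _ _) 0).inter
      (e1 _ (hD2meas _ _) 0))
  have mCA : MeasurableSet (CAev D1 D2) :=
    (e1 _ ((hD1meas _).sub (hD1meas _)) 1).inter ((e1 _ (hD2meas _ _) 1).inter
      (e1 _ (hD2meas _ _) 1))
  have mNC : MeasurableSet (NCev D1 D2) :=
    (e1 _ (hD1meas _) 0).inter ((e1 _ (hD1meas _) 0).inter
      (e1 _ ((hD2meas _ _).sub (hD2meas _ _)) 1))
  have mAC : MeasurableSet (ACev D1 D2) :=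
    (e1 _ (hD1meas _) 1).inter ((e1 _ (hD1meas _) 1).inter
      (e1 _ ((hD2meas _ _).sub (hD2meas _ _)) 1))
  have hP : (μ (CCev D1 D2 ∪ CNev D1 D2 ∪ CAev D1 D2)).toReal = dE μ Z (obsD1 Z D1) := by
    rw [hd1]
    change μ.real _ = _
    rw [← integral_indicator_one ((mCC.union mCN).union mCA)]
    apply integral_congr_ae
    filter_upwards [hmono1, hmono2] with ω h1 h2
    rcases hD101 true ω with a | a <;> rcases hD101 false ω with b | b <;>
    rcases hD201 true true ω with c | c <;> rcases hD201 false false ω with d | d <;>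
    simp only [a, b, c, d] at h1 h2 <;>
    first
    | (exfalso; linarith)
    | (simp [Set.indicator, CCev, CNev, CAev, a, b, c, d]; done)
    | (norm_num [Set.indicator, CCev, CNev, CAev, a, b, c, d]; done)
  have hI : ∀ a b c d, Integrable (fun ω => Yp true a b ω - Yp true c d ω) μ :=
    fun a b c d => (hYint _ _ _).sub (hYint _ _ _)
  have hmain : dE μ Z (obsY Z D1 D2 Yp) =
      (∫ ω in CCev D1 D2, (Yp true true true ω - Yp true false false ω) ∂μ) +
      (∫ ω in CNev D1 D2, (Yp true true false ω - Yp true false false ω) ∂μ) +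
      (∫ ω in CAev D1 D2, (Yp true true true ω - Yp true false true ω) ∂μ) +
      (∫ ω in NCev D1 D2, (Yp true false true ω - Yp true false false ω) ∂μ) +
      (∫ ω in ACev D1 D2, (Yp true true true ω - Yp true true false ω) ∂μ) := by
    rw [hdY, ← integral_indicator mCC, ← integral_indicator mCN, ← integral_indicator mCA,
      ← integral_indicator mNC, ← integral_indicator mAC]
    have i1 := (hI true true false false).indicator mCC
    have i2 := (hI true false false false).indicator mCN
    have i3 := (hI true true false true).indicator mCA
    have i4 := (hI false true false false).indicator mNC
    have i5 := (hI true true true false).indicator mAC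
    rw [← integral_add' i1 i2, ← integral_add' (i1.add i2) i3,
      ← integral_add' ((i1.add i2).add i3) i4, ← integral_add' (((i1.add i2).add i3).add i4) i5]
    apply integral_congr_ae
    filter_upwards [hmono1, hmono2, hexcl true true, hexcl true false, hexcl false true,
      hexcl false false] with ω h1 h2 x1 x2 x3 x4
    simp only [Pi.add_apply, Set.indicator, CCev, CNev, CAev, NCev, ACev, mixY, x1, x2, x3, x4,
      Set.mem_ofPred_eq]
    rcases hD101 true ω with a | a <;> rcases hD101 false ω with b | b <;>
    rcases hD201 true true ω with c | c <;> rcases hD201 false false ω with d | d <;>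
    rcases hD201 true false ω with e | e <;> rcases hD201 false true ω with f | f <;>
    simp only [a, b, c, d, e, f] at h1 h2 ⊢ <;>
    first
    | (exfalso; linarith)
    | (norm_num; done)
  have s3 : (∫ ω in NCev D1 D2, (Yp true false true ω - Yp true false false ω) ∂μ) = 0 := by
    have h := sub_eq_zero.mpr hom3
    rw [← integral_sub (hI _ _ _ _).integrableOn (hI _ _ _ _).integrableOn] at h
    rw [← h]; congr 1; ext ω; ring
  have s4 : (∫ ω in ACev D1 D2, (Yp true true true ω - Yp true true false ω) ∂μ) = 0 := by
    have h := sub_eq_zero.mpr hom4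
    rw [← integral_sub (hI _ _ _ _).integrableOn (hI _ _ _ _).integrableOn] at h
    rw [← h]; congr 1; ext ω; ring
  have hnum : (∫ ω in CCev D1 D2 ∪ CNev D1 D2 ∪ CAev D1 D2,
      (Yp true true true ω - Yp true false false ω) ∂μ) = dE μ Z (obsY Z D1 D2 Yp) := by
    have dj1 : Disjoint (CCev D1 D2) (CNev D1 D2) := by
      rw [Set.disjoint_left]
      rintro ω ⟨_, h⟩ ⟨_, h1, h2⟩
      rw [h1, h2] at h; norm_num at h
    have dj2 : Disjoint (CCev D1 D2 ∪ CNev D1 D2) (CAev D1 D2) := by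
      rw [Set.disjoint_left]
      rintro ω (⟨_, h⟩ | ⟨_, h, _⟩) ⟨_, h1, h2⟩
      · rw [h1, h2] at h; norm_num at h
      · rw [h1] at h; norm_num at h
    rw [setIntegral_union dj2 mCA (hI _ _ _ _).integrableOn (hI _ _ _ _).integrableOn,
      setIntegral_union dj1 mCN (hI _ _ _ _).integrableOn (hI _ _ _ _).integrableOn,
      hmain, s3, s4, hom1, hom2]
    ring
  refine ⟨?_, hP, ?_⟩
  · rw [← hP] at hrel1
    exact (ENNReal.toReal_pos_iff.mp hrel1).1
  · rw [hnum, hP]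
end
end

section
/- Under Independence, Relevance, Monotonicity, and the Double exclusion restriction, the first stage for D∧ satisfies ΔE[D∧|Z] = μ({C1,C2}) + μ({C1,A2}). (Lemma 2.3) -/
open MeasureTheory ProbabilityTheory

noncomputable section

variable {Ω : Type*} [MeasurableSpace Ω]

theorem integral_cond_of_indep_s8
    (μ : Measure Ω) [IsProbabilityMeasure μ] (Z f : Ω → ℝ)
    (hZ : Measurable Z) (hf : Measurable f) (h : IndepFun f Z μ) (c : ℝ)
    (hc : μ (Z ⁻¹' {c}) ≠ 0) :
    ∫ ω, f ω ∂(μ[|Z ⁻¹' {c}]) = ∫ ω, f ω ∂μ := by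
  have hs : MeasurableSet (Z ⁻¹' {c}) := hZ (measurableSet_singleton c)
  have hg : Measurable (Set.indicator {c} (fun _ => (1 : ℝ))) :=
    measurable_const.indicator (measurableSet_singleton c)
  have hi : IndepFun f (fun ω => Set.indicator {c} (fun _ => (1 : ℝ)) (Z ω)) μ :=
    h.comp measurable_id hg
  have key := hi.integral_fun_mul_eq_mul_integral hf.aestronglyMeasurable
    (hg.comp hZ).aestronglyMeasurable
  have hA : ∫ ω in Z ⁻¹' {c}, f ω ∂μ
      = ∫ ω, f ω * Set.indicator {c} (fun _ => (1 : ℝ)) (Z ω) ∂μ := by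
    rw [← integral_indicator hs]
    refine integral_congr_ae (ae_of_all _ fun ω => ?_)
    by_cases hw : Z ω = c <;> simp [Set.indicator, hw]
  have hB : ∫ ω, Set.indicator {c} (fun _ => (1 : ℝ)) (Z ω) ∂μ = (μ (Z ⁻¹' {c})).toReal := by
    change _ = μ.real _
    rw [← integral_indicator_one hs]
    rfl
  have hne : (μ (Z ⁻¹' {c})).toReal ≠ 0 := ENNReal.toReal_ne_zero.2 ⟨hc, measure_ne_top _ _⟩
  rw [ProbabilityTheory.cond, integral_smul_measure, hA, key, hB, ENNReal.toReal_inv, smul_eq_mul]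
  field_simp

theorem stmt_8
    (μ : Measure Ω) [IsProbabilityMeasure μ]
    (Z : Ω → ℝ) (D1 : Bool → Ω → ℝ) (D2 : Bool → Bool → Ω → ℝ)
    (Yp : Bool → Bool → Bool → Ω → ℝ)
    (hZmeas : Measurable Z)
    (hD1meas : ∀ b, Measurable (D1 b))
    (hD2meas : ∀ b b', Measurable (D2 b b'))
    (hYmeas : ∀ z d1 d2, Measurable (Yp z d1 d2))
    (hYint : ∀ z d1 d2, Integrable (Yp z d1 d2) μ)
    (hZ01 : ∀ ω, Z ω = 0 ∨ Z ω = 1)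
    (hZpos : 0 < μ (Z ⁻¹' {1})) (hZlt : μ (Z ⁻¹' {1}) < 1)
    (hD101 : ∀ b ω, D1 b ω = 0 ∨ D1 b ω = 1)
    (hD201 : ∀ b b' ω, D2 b b' ω = 0 ∨ D2 b b' ω = 1)
    (hindep : IndepFun
      (fun ω => ((fun b => D1 b ω), (fun b b' => D2 b b' ω), (fun z d1 d2 => Yp z d1 d2 ω))) Z μ)
    (hrel1 : 0 < dE μ Z (obsD1 Z D1))
    (hrel2 : 0 < dE μ Z (obsD2 Z D1 D2))
    (hrelAnd : 0 < dE μ Z (obsDand Z D1 D2))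
    (hrelOr : 0 < dE μ Z (obsDor Z D1 D2))
    (hmono1 : ∀ᵐ ω ∂μ, D1 false ω ≤ D1 true ω)
    (hmono2 : ∀ᵐ ω ∂μ,
      D2 false true ω * D1 false ω + D2 false false ω * (1 - D1 false ω) ≤
        D2 true true ω * D1 true ω + D2 true false ω * (1 - D1 true ω))
    (hexcl : ∀ d1 d2, ∀ᵐ ω ∂μ, Yp true d1 d2 ω = Yp false d1 d2 ω)
    (hdexcl : ∀ d1, ∀ᵐ ω ∂μ, D2 true d1 ω = D2 false d1 ω) :
    dE μ Z (obsDand Z D1 D2) = (μ (CCev D1 D2)).toReal + (μ (CAev D1 D2)).toReal := by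
  have hs0 : μ (Z ⁻¹' {0}) ≠ 0 := by
    have hc : Z ⁻¹' {0} = (Z ⁻¹' {1})ᶜ := by
      ext ω
      rcases hZ01 ω with h | h <;> simp [h]
    rw [hc, prob_compl_eq_one_sub (hZmeas (measurableSet_singleton 1))]
    exact (tsub_pos_of_lt hZlt).ne'
  have hm : ∀ b, Measurable (fun p : (Bool → ℝ) × (Bool → Bool → ℝ) × (Bool → Bool → Bool → ℝ) =>
      p.1 b * p.2.1 b true) := by
    intro b; fun_prop
  have hind : ∀ b, IndepFun (fun ω => D1 b ω * D2 b true ω) Z μ := fun b =>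
    hindep.comp (hm b) measurable_id
  have hmeas : ∀ b, Measurable (fun ω => D1 b ω * D2 b true ω) := fun b =>
    (hD1meas b).mul (hD2meas b true)
  have hint : ∀ b, Integrable (fun ω => D1 b ω * D2 b true ω) μ := by
    intro b
    refine Integrable.of_bound (hmeas b).aestronglyMeasurable 1 (ae_of_all _ fun ω => ?_)
    rcases hD101 b ω with h | h <;> rcases hD201 b true ω with h' | h' <;> simp [h, h']
  have e1 : ∫ ω, obsDand Z D1 D2 ω ∂(μ[|Z ⁻¹' {1}]) = ∫ ω, D1 true ω * D2 true true ω ∂μ := by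
    rw [← integral_cond_of_indep_s8 μ Z _ hZmeas (hmeas true) (hind true) 1 hZpos.ne']
    refine integral_congr_ae ?_
    filter_upwards [ae_cond_mem (hZmeas (measurableSet_singleton 1))] with ω hω
    have hz : Z ω = 1 := hω
    rcases hD101 true ω with h | h <;> simp [obsDand, obsD1, obsD2, hz, h]
  have e0 : ∫ ω, obsDand Z D1 D2 ω ∂(μ[|Z ⁻¹' {0}]) = ∫ ω, D1 false ω * D2 false true ω ∂μ := by
    rw [← integral_cond_of_indep_s8 μ Z _ hZmeas (hmeas false) (hind false) 0 hs0]
    refine integral_congr_ae ?_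
    filter_upwards [ae_cond_mem (hZmeas (measurableSet_singleton 0))] with ω hω
    have hz : Z ω = 0 := hω
    rcases hD101 false ω with h | h <;> simp [obsDand, obsD1, obsD2, hz, h]
  have hC1 : MeasurableSet {ω | D1 true ω - D1 false ω = 1} :=
    ((hD1meas true).sub (hD1meas false)) (measurableSet_singleton 1)
  have hCC : MeasurableSet (CCev D1 D2) :=
    hC1.inter (((hD2meas true true).sub (hD2meas false false)) (measurableSet_singleton 1))
  have hCA : MeasurableSet (CAev D1 D2) :=
    hC1.inter (((hD2meas true true) (measurableSet_singleton 1)).inter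
      ((hD2meas false false) (measurableSet_singleton 1)))
  have hI : ∀ {s : Set Ω}, MeasurableSet s → Integrable (s.indicator (1 : Ω → ℝ)) μ :=
    fun hs => (integrable_const (1 : ℝ)).indicator hs
  unfold dE
  rw [e1, e0, ← integral_sub (hint true) (hint false)]
  change _ = μ.real _ + μ.real _
  rw [← integral_indicator_one hCC, ← integral_indicator_one hCA, ← integral_add
    (hI hCC) (hI hCA)]
  refine integral_congr_ae ?_
  filter_upwards [hmono1, hdexcl true] with ω h1 h2
  revert h1
  rcases hD101 true ω with a | a <;> rcases hD101 false ω with b | b <;>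
  rcases hD201 true true ω with c | c <;> rcases hD201 false false ω with d | d <;>
    simp only [← h2, a, b, c, d, Set.indicator, CCev, CAev, Set.mem_ofPred_eq, Pi.one_apply] <;>
    norm_num
end
end

section
/- (Lower bound on the LAFTE) Under Independence, Relevance, Monotonicity, the Double exclusion restriction, the positive response condition E[Y(0,0); {C1,A2}] ≥ 0, the monotone treatment response conditions E[Y(1,1)−Y(1,0); {C1,N2}] ≥ 0 and E[Y(0,1)−Y(0,0); {C1,A2}] ≥ 0, and the monotone treatment selection conditions μ({C1,N2})·E[Y(1,1); {C1,A2}] ≥ μ({C1,A2})·E[Y(1,1); {C1,N2}] and μ({C1,N2})·E[Y(1,1); {C1,C2}] ≥ μ({C1,C2})·E[Y(1,1); {C1,N2}], it holds that ΔE[Y|Z]/ΔE[D1|Z] ≤ E[Y(1,1)−Y(0,0) | C], where C := {C1,C2} ∪ {C1,N2} ∪ {C1,A2} satisfies μ(C) = ΔE[D1|Z] > 0. (Theorem 1, lower bound) -/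
open MeasureTheory ProbabilityTheory

noncomputable section

variable {Ω : Type*} [MeasurableSpace Ω]

/-- Generic potential first treatment read off the vector of potential variables. -/
def auxD2 (z : Bool) (d1 : Bool → ℝ) (d2 : Bool → Bool → ℝ) : ℝ :=
  d2 z true * d1 z + d2 z false * (1 - d1 z)

/-- Outcome under assignment `z`, as a function of the vector of potential variables. -/
def auxY (z : Bool) (x : (Bool → ℝ) × (Bool → Bool → ℝ) × (Bool → Bool → Bool → ℝ)) : ℝ :=
  x.2.2 z true true * x.1 z * auxD2 z x.1 x.2.1 +
  x.2.2 z false true * (1 - x.1 z) * auxD2 z x.1 x.2.1 +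
  x.2.2 z true false * x.1 z * (1 - auxD2 z x.1 x.2.1) +
  x.2.2 z false false * (1 - x.1 z) * (1 - auxD2 z x.1 x.2.1)

theorem measurable_auxY (z : Bool) : Measurable (auxY z) := by
  unfold auxY auxD2
  fun_prop

/-- Conditioning on an independent instrument does not change the expectation. -/
theorem cond_integral_eq (μ : Measure Ω) [IsProbabilityMeasure μ]
    (Z A f : Ω → ℝ) (z : ℝ) (hZ : Measurable Z) (hf : Measurable f)
    (hind : IndepFun f Z μ) (hpos : μ (Z ⁻¹' {z}) ≠ 0)
    (hA : ∀ ω, Z ω = z → A ω = f ω) :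
    ∫ ω, A ω ∂(μ[|Z ⁻¹' {z}]) = ∫ ω, f ω ∂μ := by
  have hS : MeasurableSet (Z ⁻¹' {z}) := hZ (measurableSet_singleton z)
  have hm : Measurable (Set.indicator ({z} : Set ℝ) (fun _ => (1 : ℝ))) :=
    measurable_const.indicator (measurableSet_singleton z)
  have hind2 := hind.comp measurable_id hm
  have h1 : ∫ ω in Z ⁻¹' {z}, A ω ∂μ = ∫ ω in Z ⁻¹' {z}, f ω ∂μ :=
    setIntegral_congr_fun hS (fun ω hω => hA ω hω)
  have h2 : ∫ ω in Z ⁻¹' {z}, f ω ∂μ = (∫ ω, f ω ∂μ) * (μ (Z ⁻¹' {z})).toReal := by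
    have h3 := hind2.integral_fun_mul_eq_mul_integral
      hf.aestronglyMeasurable (hm.comp hZ).aestronglyMeasurable
    have e1 : (Set.indicator ({z} : Set ℝ) (fun _ => (1 : ℝ))) ∘ Z
        = (Z ⁻¹' {z}).indicator (fun _ => (1 : ℝ)) := by
      rfl
    rw [e1] at h3
    rw [integral_indicator_const _ hS] at h3
    rw [← integral_indicator hS]
    simp only [smul_eq_mul, mul_one, Measure.real, Function.comp, id] at h3
    rw [← h3]
    congr 1
    ext ω
    by_cases h : ω ∈ Z ⁻¹' {z} <;> simp [Set.indicator, h]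
  have hne : (μ (Z ⁻¹' {z})).toReal ≠ 0 :=
    ENNReal.toReal_ne_zero.mpr ⟨hpos, measure_ne_top _ _⟩
  rw [ProbabilityTheory.cond, integral_smul_measure, h1, h2, ENNReal.toReal_inv, smul_eq_mul]
  field_simp

theorem stmt_11
    (μ : Measure Ω) [IsProbabilityMeasure μ]
    (Z : Ω → ℝ) (D1 : Bool → Ω → ℝ) (D2 : Bool → Bool → Ω → ℝ)
    (Yp : Bool → Bool → Bool → Ω → ℝ)
    (hZmeas : Measurable Z)
    (hD1meas : ∀ b, Measurable (D1 b))
    (hD2meas : ∀ b b', Measurable (D2 b b'))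
    (hYmeas : ∀ z d1 d2, Measurable (Yp z d1 d2))
    (hYint : ∀ z d1 d2, Integrable (Yp z d1 d2) μ)
    (hZ01 : ∀ ω, Z ω = 0 ∨ Z ω = 1)
    (hZpos : 0 < μ (Z ⁻¹' {1})) (hZlt : μ (Z ⁻¹' {1}) < 1)
    (hD101 : ∀ b ω, D1 b ω = 0 ∨ D1 b ω = 1)
    (hD201 : ∀ b b' ω, D2 b b' ω = 0 ∨ D2 b b' ω = 1)
    (hindep : IndepFun
      (fun ω => ((fun b => D1 b ω), (fun b b' => D2 b b' ω), (fun z d1 d2 => Yp z d1 d2 ω))) Z μ)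
    (hrel1 : 0 < dE μ Z (obsD1 Z D1))
    (hrel2 : 0 < dE μ Z (obsD2 Z D1 D2))
    (hrelAnd : 0 < dE μ Z (obsDand Z D1 D2))
    (hrelOr : 0 < dE μ Z (obsDor Z D1 D2))
    (hmono1 : ∀ᵐ ω ∂μ, D1 false ω ≤ D1 true ω)
    (hmono2 : ∀ᵐ ω ∂μ,
      D2 false true ω * D1 false ω + D2 false false ω * (1 - D1 false ω) ≤
        D2 true true ω * D1 true ω + D2 true false ω * (1 - D1 true ω))
    (hexcl : ∀ d1 d2, ∀ᵐ ω ∂μ, Yp true d1 d2 ω = Yp false d1 d2 ω)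
    (hdexcl : ∀ d1, ∀ᵐ ω ∂μ, D2 true d1 ω = D2 false d1 ω)
    (hpos : 0 ≤ ∫ ω in CAev D1 D2, Yp true false false ω ∂μ)
    (hmtr1 : 0 ≤ ∫ ω in CNev D1 D2, (Yp true true true ω - Yp true true false ω) ∂μ)
    (hmtr2 : 0 ≤ ∫ ω in CAev D1 D2, (Yp true false true ω - Yp true false false ω) ∂μ)
    (hmts1 : (μ (CAev D1 D2)).toReal * ∫ ω in CNev D1 D2, Yp true true true ω ∂μ ≤
      (μ (CNev D1 D2)).toReal * ∫ ω in CAev D1 D2, Yp true true true ω ∂μ)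
    (hmts2 : (μ (CCev D1 D2)).toReal * ∫ ω in CNev D1 D2, Yp true true true ω ∂μ ≤
      (μ (CNev D1 D2)).toReal * ∫ ω in CCev D1 D2, Yp true true true ω ∂μ) :
    (μ (CCev D1 D2 ∪ CNev D1 D2 ∪ CAev D1 D2)).toReal = dE μ Z (obsD1 Z D1) ∧
    dE μ Z (obsY Z D1 D2 Yp) / dE μ Z (obsD1 Z D1) ≤
      (∫ ω in CCev D1 D2 ∪ CNev D1 D2 ∪ CAev D1 D2, (Yp true true true ω - Yp true false false ω) ∂μ) /
        (μ (CCev D1 D2 ∪ CNev D1 D2 ∪ CAev D1 D2)).toReal := by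
  set V := (fun ω => ((fun b => D1 b ω), (fun b b' => D2 b b' ω),
    (fun z d1 d2 => Yp z d1 d2 ω))) with hV
  have hVm : Measurable V := by
    rw [hV]; fun_prop
  have hp1 : μ (Z ⁻¹' {1}) ≠ 0 := hZpos.ne'
  have hp0 : μ (Z ⁻¹' {0}) ≠ 0 := by
    intro h0
    have hc : Z ⁻¹' {0} = (Z ⁻¹' {1})ᶜ := by
      ext ω
      rcases hZ01 ω with h | h <;> simp [h]
    rw [hc, prob_compl_eq_zero_iff (hZmeas (measurableSet_singleton 1))] at h0
    exact hZlt.ne h0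
  have hmD : ∀ z : Bool, Measurable (fun x : (Bool → ℝ) × (Bool → Bool → ℝ) ×
      (Bool → Bool → Bool → ℝ) => x.1 z) := fun z => by fun_prop
  have eD : dE μ Z (obsD1 Z D1) = (∫ ω, D1 true ω ∂μ) - ∫ ω, D1 false ω ∂μ := by
    unfold dE
    rw [cond_integral_eq μ Z _ (D1 true) 1 hZmeas (hD1meas _)
      (hindep.comp (hmD true) measurable_id) hp1 (by intro ω h; simp [obsD1, h]),
      cond_integral_eq μ Z _ (D1 false) 0 hZmeas (hD1meas _)
      (hindep.comp (hmD false) measurable_id) hp0 (by intro ω h; simp [obsD1, h])]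
  have eY : dE μ Z (obsY Z D1 D2 Yp) =
      (∫ ω, auxY true (V ω) ∂μ) - ∫ ω, auxY false (V ω) ∂μ := by
    unfold dE
    rw [cond_integral_eq μ Z _ (fun ω => auxY true (V ω)) 1 hZmeas
      ((measurable_auxY _).comp hVm)
      (hindep.comp (measurable_auxY true) measurable_id) hp1
      (by intro ω h; simp [obsY, obsD1, obsD2, auxY, auxD2, hV, h]),
      cond_integral_eq μ Z _ (fun ω => auxY false (V ω)) 0 hZmeas
      ((measurable_auxY _).comp hVm)
      (hindep.comp (measurable_auxY false) measurable_id) hp0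
      (by intro ω h; simp [obsY, obsD1, obsD2, auxY, auxD2, hV, h])]
  have iD : ∀ b, Integrable (D1 b) μ := fun b =>
    Integrable.mono' (integrable_const (1 : ℝ)) (hD1meas b).aestronglyMeasurable
      (Filter.Eventually.of_forall fun ω => by rcases hD101 b ω with h | h <;> simp [h])
  have iY : ∀ z, Integrable (fun ω => auxY z (V ω)) μ := fun z => by
    refine Integrable.mono' (g := fun ω => |Yp z true true ω| + |Yp z false true ω| +
      |Yp z true false ω| + |Yp z false false ω|)
      ((((hYint _ _ _).abs.add (hYint _ _ _).abs).add (hYint _ _ _).abs).add (hYint _ _ _).abs)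
      ((measurable_auxY _).comp hVm).aestronglyMeasurable
      (Filter.Eventually.of_forall fun ω => ?_)
    have a1 := abs_nonneg (Yp z true true ω)
    have a2 := abs_nonneg (Yp z false true ω)
    have a3 := abs_nonneg (Yp z true false ω)
    have a4 := abs_nonneg (Yp z false false ω)
    rcases hD101 z ω with h | h <;> rcases hD201 z true ω with h' | h' <;>
      rcases hD201 z false ω with h'' | h'' <;>
      simp [auxY, auxD2, hV, h, h', h''] <;> linarith
  have mCC : MeasurableSet (CCev D1 D2) :=
    (measurableSet_eq_fun ((hD1meas _).sub (hD1meas _)) measurable_const).inter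
      (measurableSet_eq_fun ((hD2meas _ _).sub (hD2meas _ _)) measurable_const)
  have mCN : MeasurableSet (CNev D1 D2) :=
    (measurableSet_eq_fun ((hD1meas _).sub (hD1meas _)) measurable_const).inter
      ((measurableSet_eq_fun (hD2meas _ _) measurable_const).inter
        (measurableSet_eq_fun (hD2meas _ _) measurable_const))
  have mCA : MeasurableSet (CAev D1 D2) :=
    (measurableSet_eq_fun ((hD1meas _).sub (hD1meas _)) measurable_const).inter
      ((measurableSet_eq_fun (hD2meas _ _) measurable_const).inter
        (measurableSet_eq_fun (hD2meas _ _) measurable_const))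
  have mC := (mCC.union mCN).union mCA
  have hfirst : (μ (CCev D1 D2 ∪ CNev D1 D2 ∪ CAev D1 D2)).toReal = dE μ Z (obsD1 Z D1) := by
    rw [eD, ← integral_sub (iD _) (iD _), ← Measure.real, ← integral_indicator_one mC]
    apply integral_congr_ae
    filter_upwards [hmono1, hmono2, hdexcl true, hdexcl false] with ω h1 h2 h3 h4
    rcases hD101 true ω with a | a <;> rcases hD101 false ω with b | b <;>
      rcases hD201 true true ω with c | c <;> rcases hD201 false false ω with d | d <;>
      simp [Set.indicator, CCev, CNev, CAev, a, b, c, d] <;>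
      simp [a, b, c, d] at h1 h2 h3 h4 <;> linarith
  refine ⟨hfirst, ?_⟩
  rw [hfirst]
  refine div_le_div_of_nonneg_right ?_ hrel1.le
  rw [eY, ← integral_indicator mC]
  rw [← integral_indicator mCN] at hmtr1
  rw [← integral_indicator mCA] at hmtr2
  have i1 : Integrable (fun ω => (CNev D1 D2).indicator
      (fun ω => Yp true true true ω - Yp true true false ω) ω) μ :=
    ((hYint true true true).sub (hYint true true false)).indicator mCN
  have i2 : Integrable (fun ω => (CAev D1 D2).indicator
      (fun ω => Yp true false true ω - Yp true false false ω) ω) μ :=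
    ((hYint true false true).sub (hYint true false false)).indicator mCA
  have i3 : Integrable (fun ω => auxY true (V ω) - auxY false (V ω)) μ := (iY _).sub (iY _)
  have i4 : Integrable (fun ω => (CNev D1 D2).indicator
      (fun ω => Yp true true true ω - Yp true true false ω) ω + (CAev D1 D2).indicator
      (fun ω => Yp true false true ω - Yp true false false ω) ω) μ := i1.add i2
  have key : ∫ ω, (CCev D1 D2 ∪ CNev D1 D2 ∪ CAev D1 D2).indicator
        (fun ω => Yp true true true ω - Yp true false false ω) ω ∂μ
      = ∫ ω, ((auxY true (V ω) - auxY false (V ω)) +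
        ((CNev D1 D2).indicator (fun ω => Yp true true true ω - Yp true true false ω) ω +
        (CAev D1 D2).indicator (fun ω => Yp true false true ω - Yp true false false ω) ω)) ∂μ := by
    apply integral_congr_ae
    filter_upwards [hmono1, hmono2, hdexcl true, hdexcl false, hexcl true true,
      hexcl true false, hexcl false true, hexcl false false] with ω h1 h2 h3 h4 e1 e2 e3 e4
    rcases hD101 true ω with a | a <;> rcases hD101 false ω with b | b <;>
      rcases hD201 true true ω with c | c <;> rcases hD201 false false ω with d | d <;>
      rw [c] at h3 <;> rw [d] at h4 <;>
      simp [Set.indicator, CCev, CNev, CAev, auxY, auxD2, hV, a, b, c, d, ← h3, h4,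
        e1, e2, e3, e4] <;>
      simp [a, b, c, d, ← h3, h4] at h1 h2 <;> linarith
  rw [integral_add i3 i4, integral_add i1 i2,
    integral_sub (iY _) (iY _)] at key
  rw [key]
  linarith
end
end
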